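/- For each i ∈ {1,…,n} let v^(i) ∈ ℝ^n be any vector with C^(i) v^(i) = b^(i) (such vectors exist because b^(i) lies in the range of C^(i)). Then the weighted variance satisfies the fully global bound: Σ_{i=1}^n w_i · Var_i ≥ Σ_{i=1}^n w_i · (b^(i)ᵀ v^(i)). -/

import Mathlib

open Finset Matrix

/-!
Every vector `v` gives a lower bound `2 bᵀv - vᵀCv` for the second moment `∑ x, p x * f x ^ 2` of
the residual `f = h - E`: with `u = vᵀg`, this is `2 f u ≤ p f² + u² / p` summed over the outcomes.
A solution of `C v = b` maximizes the left-hand side, and there it equals `bᵀv`.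
-/

section InformationMatrix

variable {X κ K : Type*} [Fintype X] [Field K]

/-- The information matrix `C j k = ∑ x, g j x * g k x / p x` of the test functions `g j` under the
weight `p`. The test functions are the rows of the matrix `g`, so that the bias vector of a
residual `f` is `g *ᵥ f`. -/
def informationMatrix (p : X → K) (g : Matrix κ X K) : Matrix κ κ K :=
  of fun j k => ∑ x, g j x * g k x / p x

variable [Fintype κ]

theorem informationMatrix_mulVec (p : X → K) (g : Matrix κ X K) (v : κ → K) :
    informationMatrix p g *ᵥ v = g *ᵥ fun x => (v ᵥ* g) x / p x := by
  ext j
  simp only [informationMatrix, mulVec, vecMul, dotProduct, of_apply, sum_mul, sum_div, mul_sum]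
  rw [sum_comm]
  exact sum_congr rfl fun x _ => sum_congr rfl fun k _ => by ring

theorem dotProduct_informationMatrix_mulVec (p : X → K) (g : Matrix κ X K) (v : κ → K) :
    v ⬝ᵥ informationMatrix p g *ᵥ v = ∑ x, (p x)⁻¹ * (v ᵥ* g) x ^ 2 := by
  rw [informationMatrix_mulVec, dotProduct_mulVec]
  exact sum_congr rfl fun x _ => by ring

variable [LinearOrder K] [IsStrictOrderedRing K]

theorem two_mul_dotProduct_le_sum_mul_sq_add_sum_inv_mul_sq {p : X → K} (hp : ∀ x, 0 < p x)
    (f u : X → K) :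
    2 * (f ⬝ᵥ u) ≤ ∑ x, p x * f x ^ 2 + ∑ x, (p x)⁻¹ * u x ^ 2 := by
  rw [dotProduct, mul_sum, ← sum_add_distrib]
  refine sum_le_sum fun x _ => ?_
  rw [← mul_assoc]
  exact two_mul_le_add_mul_sq (hp x)

theorem two_mul_dotProduct_sub_informationMatrix_le {p : X → K} (hp : ∀ x, 0 < p x)
    (g : Matrix κ X K) (f : X → K) (v : κ → K) :
    2 * (v ⬝ᵥ g *ᵥ f) - v ⬝ᵥ informationMatrix p g *ᵥ v ≤ ∑ x, p x * f x ^ 2 := by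
  rw [dotProduct_informationMatrix_mulVec, dotProduct_mulVec, dotProduct_comm, sub_le_iff_le_add]
  exact two_mul_dotProduct_le_sum_mul_sq_add_sum_inv_mul_sq hp f (v ᵥ* g)

theorem dotProduct_le_of_informationMatrix_mulVec_eq {p : X → K} (hp : ∀ x, 0 < p x)
    {g : Matrix κ X K} {f : X → K} {v : κ → K} (hv : informationMatrix p g *ᵥ v = g *ᵥ f) :
    g *ᵥ f ⬝ᵥ v ≤ ∑ x, p x * f x ^ 2 := by
  have hbound := two_mul_dotProduct_sub_informationMatrix_le hp g f v
  rw [hv, dotProduct_comm v] at hbound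
  linarith

end InformationMatrix

theorem fully_global_bound_general
    {X ι κ K : Type*} [Fintype X] [Fintype ι] [Fintype κ]
    [Field K] [LinearOrder K] [IsStrictOrderedRing K]
    (p : ι → X → K) (hp : ∀ i x, 0 < p i x)
    (w : ι → K) (hw : ∀ i, 0 ≤ w i)
    (h : X → K) (g : κ → X → K) (c : ι → K)
    (M : ι → K) (hM : ∀ i, M i = ∑ x, p i x * (h x - c i) ^ 2)
    (C : ι → Matrix κ κ K) (hC : ∀ i j k, C i j k = ∑ x, g j x * g k x / p i x)
    (b : ι → κ → K) (hb : ∀ i j, b i j = ∑ x, g j x * (h x - c i))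
    (v : ι → κ → K) (hv : ∀ i, C i *ᵥ v i = b i) :
    ∑ i, w i * (b i ⬝ᵥ v i) ≤ ∑ i, w i * M i := by
  refine sum_le_sum fun i _ => mul_le_mul_of_nonneg_left ?_ (hw i)
  have C_eq : C i = informationMatrix (p i) (of g) := ext (hC i)
  have b_eq : b i = of g *ᵥ fun x => h x - c i := funext (hb i)
  have hvi := hv i
  rw [C_eq, b_eq] at hvi
  rw [hM, b_eq]
  exact dotProduct_le_of_informationMatrix_mulVec_eq (hp i) hvi

/-- **Fully global bound.**
For each `i` let `v^(i)` be any vector with `C^(i) v^(i) = b^(i)`.  Then the weighted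
variance satisfies `∑ i, w i * Var i ≥ ∑ i, w i * (b^(i)ᵀ v^(i))`. -/
theorem fully_global_bound
    {X : Type*} [Fintype X] {n : ℕ}
    (p : Fin n → X → ℝ)
    (hp : ∀ i x, 0 < p i x)
    (hpsum : ∀ i, ∑ x : X, p i x = 1)
    (w : Fin n → ℝ) (hw : ∀ i, 0 ≤ w i)
    (h : X → ℝ) (g : Fin n → X → ℝ)
    (E : Fin n → ℝ) (hE : ∀ i, E i = ∑ x : X, p i x * h x)
    (V : Fin n → ℝ) (hV : ∀ i, V i = ∑ x : X, p i x * (h x - E i) ^ 2)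
    (C : Fin n → Matrix (Fin n) (Fin n) ℝ)
    (hC : ∀ i j k, C i j k = ∑ x : X, g j x * g k x / p i x)
    (b : Fin n → Fin n → ℝ)
    (hb : ∀ i j, b i j = ∑ x : X, g j x * (h x - E i))
    (v : Fin n → Fin n → ℝ)
    (hv : ∀ i, (C i).mulVec (v i) = b i) :
    ∑ i, w i * (b i ⬝ᵥ v i) ≤ ∑ i, w i * V i :=
  fully_global_bound_general p hp w hw h g E V hV C hC b hb v hv
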